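/- Let A : W → V be an injective linear map with L := Image(A) ∈ Gr(V,m), and assume L^⊥ ∩ int(K*) ≠ ∅. Define R(A) := inf{|||A − Ã||| : Ã : W → V linear such that Ãw ∈ K for some w ∈ W\{0}}. Then R(A) ≤ ‖A‖ · odist(Σ_m,L) and odist(Σ_m,L) ≤ ‖A^{-1}‖ · R(A); equivalently, 1/‖A‖ ≤ odist(Σ_m,L)/R(A) ≤ ‖A^{-1}‖. -/

import Mathlib

/-!
Both inequalities rest on rank-one maps of least norm supplied by Hahn–Banach.

Upper bound for `R(A)`: an ill-posed `L'` contains a nonzero `x ∈ K`. For every nonzero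
`v = A w` in `L` the rank-one perturbation of `A` that sends `w` to `x` has norm
`|||x - v||| / |w| ≤ ‖A‖ |||x - v||| / ‖v‖`. Taking the infimum over `v` bounds `R(A)` by
`‖A‖ odist(L', L)`.

Upper bound for `odist(Σ_m, L)`: if `B w ∈ K` with `w ≠ 0`, put `x = B w`, `v = A w`; then
`|||x - v||| ≤ |||A - B||| ‖A⁻¹‖ ‖v‖`, so it suffices to find an ill-posed `L'` with
`odist(L', L) ≤ |||x - v||| / ‖v‖`. When `x ≠ 0`, take a functional `φ` with `φ v = 1` and dual
norm `1 / ‖v‖` and follow the subspaces `L_t = {y + t φ(y) (x - v) : y ∈ L}` for `0 ≤ t ≤ 1`. All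
of them satisfy the distance bound and have dimension `m`; `L_0 = L` is annihilated by a nonzero
element of `K*`, and `L_1` contains `x`. The parameters `t` with `L_t ∩ K ≠ {0}` and those with
`L_tᗮ ∩ K* ≠ {0}` form closed sets, which cover `[0, 1]` by the theorem of the alternative
(`IsRegularCone.exists_dual`), so by connectedness some `L_t` is ill-posed (`exists_tilt_ill`).
The case `x = 0` follows by approximating the origin by nonzero points of `K`.
-/

open Module RealInnerProductSpace

/-- `N` is a norm on the real vector space `V`. -/
structure IsNorm (V : Type*) [AddCommGroup V] [Module ℝ V] (N : V → ℝ) : Prop where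
  nonneg : ∀ x, 0 ≤ N x
  eq_zero_iff : ∀ x, N x = 0 ↔ x = 0
  smul_eq : ∀ (c : ℝ) (x : V), N (c • x) = |c| * N x
  add_le : ∀ x y, N (x + y) ≤ N x + N y

/-- `K` is a regular closed convex cone: closed, convex, a cone, pointed and solid. -/
structure IsRegularCone (V : Type*) [NormedAddCommGroup V] [InnerProductSpace ℝ V]
    (K : Set V) : Prop where
  closed : IsClosed K
  convex : Convex ℝ K
  smul_mem : ∀ ⦃c : ℝ⦄, 0 < c → ∀ ⦃x⦄, x ∈ K → c • x ∈ K
  pointed : K ∩ (-K) = {0}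
  solid : (interior K).Nonempty

variable {V : Type*} [NormedAddCommGroup V] [InnerProductSpace ℝ V]

/-- The dual norm of `N` with respect to the inner product of `V`. -/
noncomputable def dualNorm (N : V → ℝ) (u : V) : ℝ :=
  sSup {r : ℝ | ∃ x : V, N x = 1 ∧ r = ⟪u, x⟫}

/-- The dual cone of `K`. -/
def dualCone (K : Set V) : Set V := {u : V | ∀ x ∈ K, 0 ≤ ⟪u, x⟫}

/-- `dist(L1,L2) = max_{x ∈ L1, x ≠ 0} min_{v ∈ L2} |||x - v||| / ‖x‖`,
with `‖·‖ = N` and `|||·||| = N'`. -/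
noncomputable def grDist (N N' : V → ℝ) (L1 L2 : Submodule ℝ V) : ℝ :=
  sSup {d : ℝ | ∃ x ∈ L1, x ≠ 0 ∧ d = sInf {c : ℝ | ∃ v ∈ L2, c = N' (x - v) / N x}}

/-- `odist(L1,L2) = max_{x ∈ L1, x ≠ 0} inf_{v ∈ L2, v ≠ 0} |||x - v||| / ‖v‖`. -/
noncomputable def grOdist (N N' : V → ℝ) (L1 L2 : Submodule ℝ V) : ℝ :=
  sSup {d : ℝ | ∃ x ∈ L1, x ≠ 0 ∧
    d = sInf {c : ℝ | ∃ v ∈ L2, v ≠ 0 ∧ c = N' (x - v) / N v}}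

/-- The set `Σ_m` of ill-posed `m`-dimensional subspaces. -/
def SigmaIll (K : Set V) (m : ℕ) : Set (Submodule ℝ V) :=
  {L | finrank ℝ L = m ∧ (L : Set V) ∩ K ≠ {0} ∧ (Lᗮ : Set V) ∩ dualCone K ≠ {0}}

/-- `dist(L, Σ_m) = inf_{L' ∈ Σ_m} dist(L, L')`. -/
noncomputable def distToIll (N N' : V → ℝ) (K : Set V) (m : ℕ) (L : Submodule ℝ V) : ℝ :=
  sInf {d : ℝ | ∃ L' ∈ SigmaIll K m, d = grDist N N' L L'}

/-- `odist(Σ_m, L) = inf_{L' ∈ Σ_m} odist(L', L)`. -/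
noncomputable def odistToIll (N N' : V → ℝ) (K : Set V) (m : ℕ) (L : Submodule ℝ V) : ℝ :=
  sInf {d : ℝ | ∃ L' ∈ SigmaIll K m, d = grOdist N N' L' L}

/-- `ν(L) = min {‖y - u‖* : u ∈ K*, y ∈ L^⊥, |||u|||* = 1}`. -/
noncomputable def nu (N N' : V → ℝ) (K : Set V) (L : Submodule ℝ V) : ℝ :=
  sInf {r : ℝ | ∃ u ∈ dualCone K, ∃ y ∈ Lᗮ, dualNorm N' u = 1 ∧ r = dualNorm N (y - u)}

/-- `ν̄(L) = min {|||v - x||| : v ∈ K, x ∈ L, ‖x‖ = 1}`. -/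
noncomputable def nubar (N N' : V → ℝ) (K : Set V) (L : Submodule ℝ V) : ℝ :=
  sInf {r : ℝ | ∃ v ∈ K, ∃ x ∈ L, N x = 1 ∧ r = N' (v - x)}

/-- `λ_v(x) = sup {t : x - t v ∈ K}`. -/
noncomputable def lambdaVec (K : Set V) (v x : V) : ℝ := sSup {t : ℝ | x - t • v ∈ K}

/-- `σ(L) = min_{v ∈ K, |||v||| = 1} max_{x ∈ L, ‖x‖ ≤ 1} λ_v(x)`. -/
noncomputable def sigmaMeas (N N' : V → ℝ) (K : Set V) (L : Submodule ℝ V) : ℝ :=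
  sInf {r : ℝ | ∃ v ∈ K, N' v = 1 ∧
    r = sSup {c : ℝ | ∃ x ∈ L, N x ≤ 1 ∧ c = lambdaVec K v x}}

/-- `Sym(L) = min_{v ∈ K, ‖v‖ = 1} sup {t ≥ 0 : ∃ x ∈ K, ‖x‖ ≤ 1, x + t v ∈ L}`. -/
noncomputable def symMeas (N : V → ℝ) (K : Set V) (L : Submodule ℝ V) : ℝ :=
  sInf {r : ℝ | ∃ v ∈ K, N v = 1 ∧
    r = sSup {t : ℝ | 0 ≤ t ∧ ∃ x ∈ K, N x ≤ 1 ∧ x + t • v ∈ L}}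

/-- The norm `‖·‖_e` induced by the pair `(K, e)`. -/
noncomputable def inducedNorm (K : Set V) (e : V) (x : V) : ℝ :=
  sInf {α : ℝ | 0 ≤ α ∧ x + α • e ∈ K ∧ -x + α • e ∈ K}

variable {W : Type*} [NormedAddCommGroup W] [InnerProductSpace ℝ W]

/-- The operator norm of a linear map `B : W → V`, with norm `NW` on `W` and `N` on `V`. -/
noncomputable def opNorm (NW : W → ℝ) (N : V → ℝ) (B : W →ₗ[ℝ] V) : ℝ :=
  sSup {r : ℝ | ∃ w : W, NW w = 1 ∧ r = N (B w)}

/-- `‖A⁻¹‖ = max_{x ∈ Image A, ‖x‖ = 1} |A⁻¹ x|` for injective `A`. -/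
noncomputable def invNorm (NW : W → ℝ) (N : V → ℝ) (A : W →ₗ[ℝ] V) : ℝ :=
  sSup {r : ℝ | ∃ w : W, N (A w) = 1 ∧ r = NW w}

/-! ### Norms on finite-dimensional spaces -/

/-- The seminorm in the sense of Mathlib underlying a norm in the sense of `IsNorm`. -/
def IsNorm.toSeminorm {E : Type*} [AddCommGroup E] [Module ℝ E] {N : E → ℝ}
    (h : IsNorm E N) : Seminorm ℝ E :=
  Seminorm.of N h.add_le (by intro c x; rw [h.smul_eq, Real.norm_eq_abs])

theorem IsNorm.map_zero {E : Type*} [AddCommGroup E] [Module ℝ E] {N : E → ℝ}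
    (h : IsNorm E N) : N 0 = 0 := (h.eq_zero_iff 0).2 rfl

theorem IsNorm.pos {E : Type*} [AddCommGroup E] [Module ℝ E] {N : E → ℝ}
    (h : IsNorm E N) {x : E} (hx : x ≠ 0) : 0 < N x :=
  lt_of_le_of_ne (h.nonneg x) (fun h0 => hx ((h.eq_zero_iff x).1 h0.symm))

theorem IsNorm.map_sub_rev {E : Type*} [AddCommGroup E] [Module ℝ E] {N : E → ℝ}
    (h : IsNorm E N) (x y : E) : N (x - y) = N (y - x) := by
  have := h.smul_eq (-1) (x - y)
  simpa using this.symm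

theorem IsNorm.comp_injective {E F : Type*} [AddCommGroup E] [Module ℝ E] [AddCommGroup F]
    [Module ℝ F] {N : F → ℝ} (h : IsNorm F N) (A : E →ₗ[ℝ] F) (hA : Function.Injective A) :
    IsNorm E (fun x => N (A x)) where
  nonneg x := h.nonneg _
  eq_zero_iff x := by rw [h.eq_zero_iff, map_eq_zero_iff A hA]
  smul_eq c x := by rw [map_smul, h.smul_eq]
  add_le x y := by rw [map_add]; exact h.add_le _ _

/-- On a finite-dimensional space every seminorm is dominated by a multiple of any norm:
both are continuous, and the unit sphere is compact. -/
theorem IsNorm.exists_bound {E : Type*} [NormedAddCommGroup E] [InnerProductSpace ℝ E]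
    [FiniteDimensional ℝ E] {N : E → ℝ} (h : IsNorm E N) (p : Seminorm ℝ E) :
    ∃ C : ℝ, 0 ≤ C ∧ ∀ x, p x ≤ C * N x := by
  have key : ∀ q : Seminorm ℝ E, Continuous q := fun q => by
    have := (q.convexOn).continuousOn isOpen_univ
    exact continuousOn_univ.1 this
  have hcN : Continuous N := key h.toSeminorm
  rcases subsingleton_or_nontrivial E with hE | hE
  · refine ⟨0, le_rfl, fun x => ?_⟩
    rw [Subsingleton.elim x 0]; simp
  have hne : (Metric.sphere (0 : E) 1).Nonempty := NormedSpace.sphere_nonempty.2 zero_le_one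
  have hcont : ContinuousOn (fun x => p x / N x) (Metric.sphere (0 : E) 1) := by
    refine ((key p).continuousOn).div hcN.continuousOn fun x hx => ?_
    exact (h.pos (ne_zero_of_mem_unit_sphere ⟨x, hx⟩)).ne'
  obtain ⟨z, hz, hmax⟩ := (isCompact_sphere (0 : E) 1).exists_isMaxOn hne hcont
  refine ⟨p z / N z, div_nonneg (apply_nonneg p z) (h.nonneg z), fun x => ?_⟩
  rcases eq_or_ne x 0 with rfl | hx
  · simp [h.map_zero]
  have hn : 0 < ‖x‖ := norm_pos_iff.2 hx
  have h1 : (‖x‖⁻¹ • x) ∈ Metric.sphere (0 : E) 1 := by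
    simp [norm_smul, hn.ne']
  have h2 := hmax h1
  have h3 : p (‖x‖⁻¹ • x) / N (‖x‖⁻¹ • x) = p x / N x := by
    rw [map_smul_eq_mul, h.smul_eq, Real.norm_eq_abs]
    exact mul_div_mul_left _ _ (abs_ne_zero.2 (inv_ne_zero hn.ne'))
  simp only [Set.mem_ofPred_eq, h3] at h2
  exact (div_le_iff₀ (h.pos hx)).1 h2

/-- Hahn–Banach: a functional equal to `1` at `w` with the least possible dual norm. -/
theorem IsNorm.exists_dual {E : Type*} [AddCommGroup E] [Module ℝ E] {N : E → ℝ}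
    (h : IsNorm E N) {w : E} (hw : w ≠ 0) :
    ∃ φ : E →ₗ[ℝ] ℝ, φ w = 1 ∧ ∀ y, |φ y| * N w ≤ N y := by
  obtain ⟨g, hg, hle⟩ := exists_extension_of_le_sublinear
    (LinearPMap.mkSpanSingleton w (N w) hw) N
    (fun c hc x => by rw [h.smul_eq, abs_of_pos hc]) h.add_le (by
      rintro ⟨x, hx⟩
      obtain ⟨c, rfl⟩ := Submodule.mem_span_singleton.1 hx
      change (LinearPMap.mkSpanSingleton w (N w) hw) _ ≤ N (c • w)
      rw [LinearPMap.mkSpanSingleton'_apply, h.smul_eq, smul_eq_mul]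
      exact mul_le_mul_of_nonneg_right (le_abs_self c) (h.nonneg w))
  have hgw : g w = N w := by
    have := hg ⟨w, Submodule.mem_span_singleton_self w⟩
    simp only at this
    rw [this, LinearPMap.mkSpanSingleton_apply]
  have hp := h.pos hw
  refine ⟨(N w)⁻¹ • g, by simp [hgw, hp.ne'], fun y => ?_⟩
  have h1 := hle y
  have h2 := hle (-y)
  have h3 : N (-y) = N y := by simpa using h.smul_eq (-1) y
  rw [map_neg, h3] at h2
  rw [LinearMap.smul_apply, smul_eq_mul, abs_mul, abs_of_pos (inv_pos.2 hp), mul_comm,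
    ← mul_assoc, mul_inv_cancel₀ hp.ne', one_mul]
  exact abs_le.2 ⟨by linarith, h1⟩

theorem le_opNorm_mul {E F : Type*} [NormedAddCommGroup E] [InnerProductSpace ℝ E]
    [FiniteDimensional ℝ E] [NormedAddCommGroup F] [InnerProductSpace ℝ F]
    {NE : E → ℝ} {NF : F → ℝ} (hE : IsNorm E NE) (hF : IsNorm F NF) (B : E →ₗ[ℝ] F) (w : E) :
    NF (B w) ≤ opNorm NE NF B * NE w := by
  rcases eq_or_ne w 0 with rfl | hw
  · simp [hF.map_zero, hE.map_zero]
  have hp := hE.pos hw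
  obtain ⟨C, -, hC⟩ := hE.exists_bound (hF.toSeminorm.comp B)
  rw [← div_le_iff₀ hp]
  refine le_csSup ⟨C, ?_⟩ ⟨(NE w)⁻¹ • w, ?_, ?_⟩
  · rintro r ⟨y, hy, rfl⟩
    have := hC y
    rw [hy, mul_one] at this
    exact this
  · rw [hE.smul_eq, abs_of_pos (inv_pos.2 hp), inv_mul_cancel₀ hp.ne']
  · rw [map_smul, hF.smul_eq, abs_of_pos (inv_pos.2 hp)]
    field_simp

theorem opNorm_le {E F : Type*} [NormedAddCommGroup E] [InnerProductSpace ℝ E]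
    [NormedAddCommGroup F] [InnerProductSpace ℝ F]
    {NE : E → ℝ} {NF : F → ℝ} (B : E →ₗ[ℝ] F) {c : ℝ} (hc : 0 ≤ c)
    (h : ∀ w, NF (B w) ≤ c * NE w) : opNorm NE NF B ≤ c := by
  refine Real.sSup_le ?_ hc
  rintro r ⟨w, hw, rfl⟩
  simpa [hw] using h w

theorem opNorm_nonneg {E F : Type*} [NormedAddCommGroup E] [InnerProductSpace ℝ E]
    [NormedAddCommGroup F] [InnerProductSpace ℝ F]
    {NE : E → ℝ} {NF : F → ℝ} (hF : IsNorm F NF) (B : E →ₗ[ℝ] F) : 0 ≤ opNorm NE NF B := by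
  refine Real.sSup_nonneg ?_
  rintro r ⟨w, -, rfl⟩
  exact hF.nonneg _

theorem le_invNorm_mul {E F : Type*} [NormedAddCommGroup E] [InnerProductSpace ℝ E]
    [FiniteDimensional ℝ E] [NormedAddCommGroup F] [InnerProductSpace ℝ F]
    {NE : E → ℝ} {NF : F → ℝ} (hE : IsNorm E NE) (hF : IsNorm F NF) (A : E →ₗ[ℝ] F)
    (hA : Function.Injective A) (w : E) :
    NE w ≤ invNorm NE NF A * NF (A w) :=
  -- `invNorm` is the operator norm of the identity from the norm `NF ∘ A` to the norm `NE`.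
  le_opNorm_mul (hF.comp_injective A hA) hE LinearMap.id w

/-! ### The cone and its dual -/

theorem IsRegularCone.zero_mem {K : Set V} (hK : IsRegularCone V K) : (0 : V) ∈ K := by
  have : (0 : V) ∈ K ∩ (-K) := by rw [hK.pointed]; rfl
  exact this.1

theorem IsRegularCone.zero_notMem_interior [Nontrivial V] {K : Set V} (hK : IsRegularCone V K) :
    (0 : V) ∉ interior K := by
  intro h0
  rw [mem_interior_iff_mem_nhds, Metric.mem_nhds_iff] at h0
  obtain ⟨ε, hε, hball⟩ := h0
  obtain ⟨x, hx⟩ := exists_ne (0 : V)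
  have hn := norm_pos_iff.2 hx
  set y : V := (ε / 2 / ‖x‖) • x with hy
  have hyn : ‖y‖ = ε / 2 := by
    rw [hy, norm_smul, Real.norm_of_nonneg (by positivity)]; field_simp
  have h1 : y ∈ K := hball (by rw [mem_ball_zero_iff, hyn]; linarith)
  have h2 : -y ∈ K := hball (by rw [mem_ball_zero_iff, norm_neg, hyn]; linarith)
  have h3 : y ∈ K ∩ (-K) := ⟨h1, h2⟩
  rw [hK.pointed, Set.mem_singleton_iff] at h3
  rw [h3, norm_zero] at hyn
  linarith

/-- If `Lᗮ` meets the interior of `K*`, then `L` meets `K` only at the origin. -/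
theorem eq_zero_of_mem_cone {K : Set V} {L : Submodule ℝ V}
    (hint : ((Lᗮ : Set V) ∩ interior (dualCone K)).Nonempty) {x : V} (hxL : x ∈ L)
    (hxK : x ∈ K) : x = 0 := by
  obtain ⟨u, huL, hu⟩ := hint
  have hux : ⟪u, x⟫ = 0 := (Submodule.mem_orthogonal' L u).1 huL x hxL
  have hc : Filter.Tendsto (fun t : ℝ => u - t • x) (nhds 0) (nhds u) := by
    have : Continuous (fun t : ℝ => u - t • x) := by fun_prop
    simpa using this.tendsto 0
  have hev := hc.eventually (mem_interior_iff_mem_nhds.1 hu)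
  obtain ⟨ε, hε, hball⟩ := Metric.eventually_nhds_iff.1 hev
  have hmem : u - (ε / 2) • x ∈ dualCone K := hball (by
    rw [Real.dist_eq, sub_zero, abs_of_pos (by linarith)]; linarith)
  have h1 := hmem x hxK
  rw [inner_sub_left, hux, real_inner_smul_left, real_inner_self_eq_norm_sq] at h1
  have h2 : ‖x‖ ^ 2 ≤ 0 := by nlinarith
  have h3 : ‖x‖ = 0 := by nlinarith [norm_nonneg x]
  exact norm_eq_zero.1 h3

/-- Theorem of the alternative: a subspace meeting `K` only at the origin lies in the kernel of
a nonzero element of the dual cone, normalised here to have norm `1`. -/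
theorem IsRegularCone.exists_dual [FiniteDimensional ℝ V] [Nontrivial V] {K : Set V}
    (hK : IsRegularCone V K)
    {M : Submodule ℝ V} (hM : ∀ x ∈ M, x ∈ K → x = 0) :
    ∃ u ∈ dualCone K, ‖u‖ = 1 ∧ ∀ y ∈ M, ⟪u, y⟫ = 0 := by
  have hdisj : Disjoint (interior K) (M : Set V) := by
    rw [Set.disjoint_left]
    intro x hx hxM
    exact hK.zero_notMem_interior (hM x hxM (interior_subset hx) ▸ hx)
  obtain ⟨f, a, hf, ha⟩ := geometric_hahn_banach_open hK.convex.interior isOpen_interior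
    M.convex hdisj
  -- A linear functional bounded below on a subspace vanishes there.
  have hfM : ∀ y ∈ M, f y = 0 := by
    intro y hy
    by_contra hne
    have := ha (((a - 1) / f y) • y) (M.smul_mem _ hy)
    rw [map_smul, smul_eq_mul, div_mul_cancel₀ _ hne] at this
    linarith
  have ha0 : a ≤ 0 := by simpa using ha 0 M.zero_mem
  have hKcl : K ⊆ closure (interior K) := by
    rw [hK.convex.closure_interior_eq_closure_of_nonempty_interior hK.solid]
    exact subset_closure
  have hfK : ∀ x ∈ K, f x ≤ 0 := fun x hx =>
    closure_minimal (s := interior K) (t := {x | f x ≤ 0})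
      (fun z hz => (hf z hz).le.trans ha0)
      (isClosed_le f.continuous continuous_const) (hKcl hx)
  set g : V := (InnerProductSpace.toDual ℝ V).symm f with hg
  have hgf : ∀ x, ⟪g, x⟫ = f x := fun x => by
    rw [hg, InnerProductSpace.toDual_symm_apply]
  have hg0 : g ≠ 0 := by
    rintro h0
    obtain ⟨e, he⟩ := hK.solid
    have h1 := hf e he
    rw [← hgf, h0, inner_zero_left] at h1
    linarith
  have hn := norm_pos_iff.2 hg0
  refine ⟨(-‖g‖⁻¹) • g, fun x hx => ?_, ?_, fun y hy => ?_⟩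
  · rw [real_inner_smul_left, hgf]
    have := mul_nonneg (inv_nonneg.2 hn.le) (neg_nonneg.2 (hfK x hx))
    linarith
  · rw [norm_smul, norm_neg, norm_inv, norm_norm, inv_mul_cancel₀ hn.ne']
  · rw [real_inner_smul_left, hgf, hfM y hy, mul_zero]

/-! ### Deforming a subspace until it is ill-posed -/

/-- The graph-like deformation `y ↦ y + t φ(y) d`. -/
noncomputable def tilt (φ : V →ₗ[ℝ] ℝ) (d : V) (t : ℝ) : V →ₗ[ℝ] V :=
  LinearMap.id + t • φ.smulRight d

theorem tilt_apply (φ : V →ₗ[ℝ] ℝ) (d : V) (t : ℝ) (y : V) :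
    tilt φ d t y = y + (t * φ y) • d := by
  simp [tilt, mul_smul]

theorem tilt_eq_zero {φ : V →ₗ[ℝ] ℝ} {d : V} {t : ℝ} {L : Submodule ℝ V} (hd : d ∉ L) {y : V}
    (hy : y ∈ L) (h : tilt φ d t y = 0) : y = 0 := by
  rw [tilt_apply] at h
  by_cases hc : t * φ y = 0
  · simpa [hc] using h
  · refine absurd ?_ hd
    have h1 : (t * φ y) • d ∈ L := by
      rw [eq_neg_of_add_eq_zero_right h]; exact L.neg_mem hy
    have := L.smul_mem (t * φ y)⁻¹ h1
    rwa [smul_smul, inv_mul_cancel₀ hc, one_smul] at this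

/-- Along the path of subspaces `tilt φ d t (L)`, `0 ≤ t ≤ 1`, from `L` to a subspace meeting `K`
nontrivially, some member is ill-posed: the parameters where the subspace meets `K` and those where
its orthogonal complement meets `K*` form two nonempty closed sets that cover the interval. -/
theorem exists_tilt_ill [FiniteDimensional ℝ V] [Nontrivial V] {K : Set V}
    (hK : IsRegularCone V K) {L : Submodule ℝ V}
    (hint : ((Lᗮ : Set V) ∩ interior (dualCone K)).Nonempty)
    (φ : V →ₗ[ℝ] ℝ) {v x : V} (hv : v ∈ L) (hv0 : v ≠ 0) (hφ : φ v = 1) (hx : x ∈ K)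
    (hx0 : x ≠ 0) :
    ∃ t ∈ Set.Icc (0 : ℝ) 1, L.map (tilt φ (x - v) t) ∈ SigmaIll K (finrank ℝ L) := by
  have hxL : x ∉ L := fun h => hx0 (eq_zero_of_mem_cone hint h hx)
  have hd : x - v ∉ L := fun h => hxL (by simpa using L.add_mem h hv)
  set d := x - v with hdd
  have hφc : Continuous φ := φ.continuous_of_finiteDimensional
  have hSc : IsCompact (Set.Icc (0 : ℝ) 1 ×ˢ Metric.sphere (0 : V) 1) :=
    isCompact_Icc.prod (isCompact_sphere 0 1)
  let P : Set (ℝ × V) := {p | p.2 ∈ L ∧ p.2 + (p.1 * φ p.2) • d ∈ K}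
  let Q : Set (ℝ × V) := {p | (∀ z ∈ K, 0 ≤ ⟪p.2, z⟫) ∧
    ∀ y ∈ L, ⟪p.2, y + (p.1 * φ y) • d⟫ = 0}
  have hP : IsClosed P := by
    refine IsClosed.inter ?_ ?_
    · exact (Submodule.closed_of_finiteDimensional L).preimage continuous_snd
    · exact hK.closed.preimage (by fun_prop)
  have hQ : IsClosed Q := by
    refine IsClosed.inter ?_ ?_
    · have : {p : ℝ × V | ∀ z ∈ K, 0 ≤ ⟪p.2, z⟫} = ⋂ z ∈ K, {p : ℝ × V | 0 ≤ ⟪p.2, z⟫} := by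
        ext; simp
      change IsClosed {p : ℝ × V | ∀ z ∈ K, 0 ≤ ⟪p.2, z⟫}
      rw [this]
      exact isClosed_biInter fun z _ => isClosed_le continuous_const (by fun_prop)
    · have : {p : ℝ × V | ∀ y ∈ L, ⟪p.2, y + (p.1 * φ y) • d⟫ = 0} =
          ⋂ y ∈ L, {p : ℝ × V | ⟪p.2, y + (p.1 * φ y) • d⟫ = 0} := by
        ext; simp
      change IsClosed {p : ℝ × V | ∀ y ∈ L, ⟪p.2, y + (p.1 * φ y) • d⟫ = 0}
      rw [this]
      exact isClosed_biInter fun y _ => isClosed_eq (by fun_prop) continuous_const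
  have hTP := ((hSc.inter_right hP).image continuous_fst).isClosed
  have hTQ := ((hSc.inter_right hQ).image continuous_fst).isClosed
  -- At each parameter, the alternative: meet `K` or be annihilated by an element of `K*`.
  have hcover : ∀ t ∈ Set.Icc (0 : ℝ) 1, (∀ y ∈ L, tilt φ d t y ∈ K → y = 0) →
      t ∈ Prod.fst '' ((Set.Icc (0 : ℝ) 1 ×ˢ Metric.sphere (0 : V) 1) ∩ Q) := by
    intro t ht h
    obtain ⟨u, huK, hu1, hu⟩ := hK.exists_dual (M := L.map (tilt φ d t)) (by
      rintro _ ⟨y, hy, rfl⟩ hyK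
      rw [h y hy hyK, map_zero])
    refine ⟨(t, u), ⟨⟨ht, by simpa using hu1⟩, huK, fun y hy => ?_⟩, rfl⟩
    have := hu _ (Submodule.mem_map_of_mem hy)
    rwa [tilt_apply] at this
  have hmain := isPreconnected_closed_iff.1 (isPreconnected_Icc (a := (0 : ℝ)) (b := 1))
    _ _ hTP hTQ (by
      intro t ht
      by_cases h : ∀ y ∈ L, tilt φ d t y ∈ K → y = 0
      · exact Or.inr (hcover t ht h)
      · push Not at h
        obtain ⟨y, hy, hyK, hy0⟩ := h
        have hn := norm_pos_iff.2 hy0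
        refine Or.inl ⟨(t, ‖y‖⁻¹ • y), ⟨⟨ht, ?_⟩, L.smul_mem _ hy, ?_⟩, rfl⟩
        · simp [norm_smul, hn.ne']
        · have := hK.smul_mem (inv_pos.2 hn) hyK
          rw [← map_smul, tilt_apply] at this
          exact this)
    (by
      have hn := norm_pos_iff.2 hv0
      refine ⟨1, ⟨by norm_num, by norm_num⟩, (1, ‖v‖⁻¹ • v),
        ⟨⟨⟨by norm_num, by norm_num⟩, ?_⟩, L.smul_mem _ hv, ?_⟩, rfl⟩
      · simp [norm_smul, hn.ne']
      · have := hK.smul_mem (inv_pos.2 hn) hx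
        have e : ‖v‖⁻¹ • x = ‖v‖⁻¹ • v + ((1 : ℝ) * φ (‖v‖⁻¹ • v)) • d := by
          rw [map_smul, hφ, hdd, one_mul, smul_eq_mul, mul_one, smul_sub]; abel
        rwa [e] at this)
    (by
      refine ⟨0, ⟨by norm_num, by norm_num⟩, hcover 0 ⟨by norm_num, by norm_num⟩ ?_⟩
      intro y hy hyK
      rw [tilt_apply] at hyK
      exact eq_zero_of_mem_cone hint hy (by simpa using hyK))
  obtain ⟨t, ht, ⟨⟨t₁, y⟩, ⟨⟨-, hy1⟩, hyL, hyK⟩, rfl⟩, ⟨⟨t₂, u⟩, ⟨⟨-, hu1⟩, huK, hu⟩, he⟩⟩ := hmain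
  simp only at he ht hyK hu huK hy1 hu1 hyL
  subst he
  refine ⟨t₂, ht, ?_, ?_, ?_⟩
  · rw [← LinearMap.range_domRestrict]
    refine LinearMap.finrank_range_of_inj ((injective_iff_map_eq_zero _).2 fun z hz => ?_)
    exact Subtype.ext (tilt_eq_zero hd z.2 hz)
  · intro h
    have h1 : tilt φ d t₂ y ∈ ((L.map (tilt φ d t₂) : Submodule ℝ V) : Set V) ∩ K :=
      ⟨Submodule.mem_map_of_mem hyL, by rw [tilt_apply]; exact hyK⟩
    rw [h] at h1
    rw [tilt_eq_zero hd hyL h1] at hy1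
    simp at hy1
  · intro h
    have h1 : u ∈ (((L.map (tilt φ d t₂))ᗮ : Submodule ℝ V) : Set V) ∩ dualCone K := by
      refine ⟨(Submodule.mem_orthogonal' _ _).2 ?_, huK⟩
      rintro _ ⟨z, hz, rfl⟩
      rw [tilt_apply]; exact hu z hz
    rw [h, Set.mem_singleton_iff] at h1
    rw [h1] at hu1
    simp at hu1

/-- The distance from `L` to the ill-posed subspaces is at most the relative distance from any
nonzero `v ∈ L` to any nonzero `x ∈ K`. -/
theorem exists_ill_grOdist_le [FiniteDimensional ℝ V] [Nontrivial V] {N N' : V → ℝ}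
    (hN : IsNorm V N) (hN' : IsNorm V N') {K : Set V}
    (hK : IsRegularCone V K) {L : Submodule ℝ V}
    (hint : ((Lᗮ : Set V) ∩ interior (dualCone K)).Nonempty)
    {v x : V} (hv : v ∈ L) (hv0 : v ≠ 0) (hx : x ∈ K) (hx0 : x ≠ 0) :
    ∃ L' ∈ SigmaIll K (finrank ℝ L), grOdist N N' L' L ≤ N' (x - v) / N v := by
  obtain ⟨φ, hφ, hφN⟩ := hN.exists_dual hv0
  obtain ⟨t, ht, hS⟩ := exists_tilt_ill hK hint φ hv hv0 hφ hx hx0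
  refine ⟨_, hS, Real.sSup_le ?_ (div_nonneg (hN'.nonneg _) (hN.nonneg _))⟩
  rintro _ ⟨_, ⟨y, hy, rfl⟩, hz0, rfl⟩
  have hy0 : y ≠ 0 := by rintro rfl; exact hz0 (map_zero _)
  refine le_trans (csInf_le ⟨0, ?_⟩ ⟨y, hy, hy0, rfl⟩) ?_
  · rintro _ ⟨z, -, -, rfl⟩
    exact div_nonneg (hN'.nonneg _) (hN.nonneg _)
  rw [tilt_apply, add_sub_cancel_left, hN'.smul_eq, abs_mul, abs_of_nonneg ht.1,
    div_le_div_iff₀ (hN.pos hy0) (hN.pos hv0)]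
  have h1 : t * |φ y| * N v ≤ N y := by
    have := mul_le_mul ht.2 (hφN y) (mul_nonneg (abs_nonneg _) (hN.nonneg _)) zero_le_one
    linarith
  have := mul_le_mul_of_nonneg_left h1 (hN'.nonneg (x - v))
  linarith

/-- The set whose supremum defines `grOdist` is bounded: taking `v` large in `L` shows that each
infimum is at most `C + 1`, where `N' ≤ C N`. -/
theorem bddAbove_grOdist [FiniteDimensional ℝ V] {N N' : V → ℝ}
    (hN : IsNorm V N) (hN' : IsNorm V N') (L' : Submodule ℝ V) {L : Submodule ℝ V} {v : V}
    (hv : v ∈ L) (hv0 : v ≠ 0) :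
    BddAbove {d : ℝ | ∃ x ∈ L', x ≠ 0 ∧
      d = sInf {c : ℝ | ∃ v ∈ L, v ≠ 0 ∧ c = N' (x - v) / N v}} := by
  obtain ⟨C, hC0, hC⟩ := hN.exists_bound hN'.toSeminorm
  replace hC : ∀ x, N' x ≤ C * N x := hC
  refine ⟨C + 1, ?_⟩
  rintro _ ⟨x, -, -, rfl⟩
  have hp := hN.pos hv0
  set s : ℝ := N' x / N v + 1 with hs
  have hs0 : 0 < s := by
    have := div_nonneg (hN'.nonneg x) hp.le
    linarith
  have hsv : s • v ≠ 0 := smul_ne_zero hs0.ne' hv0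
  refine le_trans (csInf_le ⟨0, ?_⟩ ⟨s • v, L.smul_mem _ hv, hsv, rfl⟩) ?_
  · rintro _ ⟨z, -, -, rfl⟩
    exact div_nonneg (hN'.nonneg _) (hN.nonneg _)
  rw [div_le_iff₀ (hN.pos hsv)]
  have h1 : N' (x - s • v) ≤ N' x + N' (s • v) := by
    have h2 := hN'.add_le x (-(s • v))
    have h3 : N' (-(s • v)) = N' (s • v) := by simpa using hN'.smul_eq (-1) (s • v)
    rwa [h3, ← sub_eq_add_neg] at h2
  have h2 : N (s • v) = N' x + N v := by
    rw [hN.smul_eq, abs_of_pos hs0, hs]; field_simp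
  have := hC (s • v)
  linarith


/-- Renegar's distance to ill-posedness versus the Grassmann distance, infeasible case:
`R(A) ≤ ‖A‖ ⬝ odist(Σ_m,L)` and `odist(Σ_m,L) ≤ ‖A⁻¹‖ ⬝ R(A)`. -/
theorem stmt_6 {V : Type*} [NormedAddCommGroup V] [InnerProductSpace ℝ V]
    [FiniteDimensional ℝ V]
    {W : Type*} [NormedAddCommGroup W] [InnerProductSpace ℝ W] [FiniteDimensional ℝ W]
    (N N' : V → ℝ) (hN : IsNorm V N) (hN' : IsNorm V N')
    (NW : W → ℝ) (hNW : IsNorm W NW)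
    (K : Set V) (hK : IsRegularCone V K)
    (m : ℕ) (hm : m < finrank ℝ V) (hW : finrank ℝ W = m)
    (A : W →ₗ[ℝ] V) (hinj : Function.Injective A)
    (hL : finrank ℝ (LinearMap.range A) = m)
    (hint : (((LinearMap.range A)ᗮ : Set V) ∩ interior (dualCone K)).Nonempty) :
    sInf {r : ℝ | ∃ B : W →ₗ[ℝ] V,
        (∃ w : W, w ≠ 0 ∧ B w ∈ K) ∧
        r = opNorm NW N' (A - B)} ≤
      opNorm NW N A * odistToIll N N' K m (LinearMap.range A) ∧
    odistToIll N N' K m (LinearMap.range A) ≤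
      invNorm NW N A * sInf {r : ℝ | ∃ B : W →ₗ[ℝ] V,
        (∃ w : W, w ≠ 0 ∧ B w ∈ K) ∧
        r = opNorm NW N' (A - B)} := by
  rcases Nat.eq_zero_or_pos m with rfl | hm0
  · -- Both infima are over empty sets, hence `0` by the convention for `sInf`.
    have hsub : Subsingleton W := finrank_zero_iff.1 hW
    have h1 : {r : ℝ | ∃ B : W →ₗ[ℝ] V, (∃ w : W, w ≠ 0 ∧ B w ∈ K) ∧
        r = opNorm NW N' (A - B)} = ∅ := by
      ext r
      simp only [Set.mem_ofPred_eq, Set.mem_empty_iff_false, iff_false]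
      rintro ⟨B, ⟨w, hw, -⟩, -⟩
      exact hw (Subsingleton.elim _ _)
    have h2 : odistToIll N N' K 0 (LinearMap.range A) = 0 := by
      have : {d : ℝ | ∃ L' ∈ SigmaIll K 0, d = grOdist N N' L' (LinearMap.range A)} = ∅ := by
        ext r
        simp only [Set.mem_ofPred_eq, Set.mem_empty_iff_false, iff_false]
        rintro ⟨L', ⟨hd, hne, -⟩, -⟩
        rw [Submodule.finrank_eq_zero.1 hd] at hne
        refine hne ?_
        ext z
        simp only [Submodule.bot_coe, Set.mem_inter_iff, Set.mem_singleton_iff]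
        exact ⟨fun h => h.1, fun h => ⟨h, h ▸ hK.zero_mem⟩⟩
      rw [odistToIll, this, Real.sInf_empty]
    rw [h1, h2, Real.sInf_empty]
    simp
  have : Nontrivial W := Module.nontrivial_of_finrank_pos (R := ℝ) (by omega)
  have : Nontrivial V := Module.nontrivial_of_finrank_pos (R := ℝ) (by omega)
  obtain ⟨w₀, hw₀⟩ := exists_ne (0 : W)
  obtain ⟨e, he⟩ := hK.solid
  have he0 : e ≠ 0 := fun h => hK.zero_notMem_interior (h ▸ he)
  have heK := interior_subset he
  have hA0 : ∀ {w : W}, w ≠ 0 → A w ≠ 0 := fun hw h => hw (hinj (h.trans (map_zero A).symm))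
  set L := LinearMap.range A with hLdef
  have hmem : ∀ w, A w ∈ L := fun w => ⟨w, rfl⟩
  set S : Set ℝ := {r : ℝ | ∃ B : W →ₗ[ℝ] V, (∃ w : W, w ≠ 0 ∧ B w ∈ K) ∧
        r = opNorm NW N' (A - B)} with hS
  have hSbdd : BddBelow S := ⟨0, by
    rintro _ ⟨B, -, rfl⟩
    exact opNorm_nonneg hN' _⟩
  have hSne : S.Nonempty := ⟨_, 0, ⟨w₀, hw₀, by simpa using hK.zero_mem⟩, rfl⟩
  have hgr_nonneg : ∀ L', 0 ≤ grOdist N N' L' L := by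
    intro L'
    refine Real.sSup_nonneg ?_
    rintro _ ⟨x, -, -, rfl⟩
    refine Real.sInf_nonneg ?_
    rintro _ ⟨z, -, -, rfl⟩
    exact div_nonneg (hN'.nonneg _) (hN.nonneg _)
  have hill : ∀ {v x : V}, v ∈ L → v ≠ 0 → x ∈ K → x ≠ 0 →
      ∃ L' ∈ SigmaIll K m, grOdist N N' L' L ≤ N' (x - v) / N v := by
    intro v x hv hv0 hx hx0
    have := exists_ill_grOdist_le hN hN' hK hint hv hv0 hx hx0
    rwa [hL] at this
  constructor
  · have hpos : 0 < opNorm NW N A := by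
      by_contra hle
      have h1 := le_opNorm_mul hNW hN A w₀
      have h2 := hN.pos (hA0 hw₀)
      have h3 := hNW.nonneg w₀
      nlinarith
    rw [mul_comm, ← div_le_iff₀ hpos]
    obtain ⟨L₀, hL₀, -⟩ := hill (hmem w₀) (hA0 hw₀) heK he0
    refine le_csInf ⟨_, L₀, hL₀, rfl⟩ ?_
    rintro _ ⟨L', ⟨-, hne, -⟩, rfl⟩
    obtain ⟨x, hxL, hxK, hx0⟩ : ∃ x ∈ L', x ∈ K ∧ x ≠ 0 := by
      by_contra hcon
      push Not at hcon
      refine hne (Set.Subset.antisymm (fun z hz => hcon z hz.1 hz.2) ?_)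
      rintro _ rfl
      exact ⟨L'.zero_mem, hK.zero_mem⟩
    refine le_trans ?_ (le_csSup (bddAbove_grOdist hN hN' L' (hmem w₀) (hA0 hw₀))
      ⟨x, hxL, hx0, rfl⟩)
    refine le_csInf ⟨_, A w₀, hmem w₀, hA0 hw₀, rfl⟩ ?_
    rintro _ ⟨_, ⟨w, rfl⟩, hv0, rfl⟩
    have hw : w ≠ 0 := by rintro rfl; exact hv0 (map_zero A)
    have hwp := hNW.pos hw
    -- The smallest perturbation of `A` sending `w` to `x` has rank one.
    obtain ⟨φ, hφ, hφN⟩ := hNW.exists_dual hw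
    let B : W →ₗ[ℝ] V := A + φ.smulRight (x - A w)
    have hB : sInf S ≤ N' (x - A w) / NW w := by
      refine (csInf_le hSbdd ⟨B, ⟨w, hw, by simpa [B, hφ] using hxK⟩, rfl⟩).trans ?_
      refine opNorm_le _ (div_nonneg (hN'.nonneg _) hwp.le) fun y => ?_
      have h1 : (A - B) y = (-φ y) • (x - A w) := by
        simp [B]
      rw [h1, hN'.smul_eq, abs_neg, div_mul_eq_mul_div, le_div_iff₀ hwp]
      have := mul_le_mul_of_nonneg_left (hφN y) (hN'.nonneg (x - A w))
      linarith
    rw [div_le_iff₀ hpos]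
    refine hB.trans ?_
    rw [div_mul_eq_mul_div, div_le_div_iff₀ hwp (hN.pos hv0)]
    have := mul_le_mul_of_nonneg_left (le_opNorm_mul hNW hN A w) (hN'.nonneg (x - A w))
    linarith
  · have hpos : 0 < invNorm NW N A := by
      by_contra hle
      have h1 := le_invNorm_mul hNW hN A hinj w₀
      have h2 := hNW.pos hw₀
      have h3 := hN.nonneg (A w₀)
      nlinarith
    rw [mul_comm, ← div_le_iff₀ hpos]
    refine le_csInf hSne ?_
    rintro _ ⟨B, ⟨w, hw, hBK⟩, rfl⟩
    rw [div_le_iff₀ hpos]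
    have hvp := hN.pos (hA0 hw)
    set D := odistToIll N N' K m L with hD
    have hDle : ∀ x ∈ K, x ≠ 0 → D * N (A w) ≤ N' (x - A w) := by
      intro x hx hx0
      obtain ⟨L', hL', hle⟩ := hill (hmem w) (hA0 hw) hx hx0
      rw [← le_div_iff₀ hvp]
      refine le_trans (csInf_le ⟨0, ?_⟩ ⟨L', hL', rfl⟩) hle
      rintro _ ⟨L'', -, rfl⟩
      exact hgr_nonneg L''
    have hDB : D * N (A w) ≤ N' (B w - A w) := by
      rcases eq_or_ne (B w) 0 with h0 | h0
      · -- The origin is approached by the nonzero points `ε • e` of the cone.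
        rw [h0]
        refine le_of_forall_pos_le_add fun ε hε => ?_
        have hep := hN'.pos he0
        have hc : 0 < ε / N' e := div_pos hε hep
        have h1 := hDle _ (hK.smul_mem hc heK) (smul_ne_zero hc.ne' he0)
        have h2 := hN'.add_le (0 - A w) ((ε / N' e) • e)
        rw [hN'.smul_eq, abs_of_pos hc, div_mul_cancel₀ _ hep.ne'] at h2
        rw [show (ε / N' e) • e - A w = 0 - A w + (ε / N' e) • e by abel] at h1
        linarith
      · exact hDle _ hBK h0
    have h1 : N' (B w - A w) ≤ opNorm NW N' (A - B) * NW w := by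
      rw [hN'.map_sub_rev]
      exact le_opNorm_mul hNW hN' (A - B) w
    have h2 := mul_le_mul_of_nonneg_left (le_invNorm_mul hNW hN A hinj w)
      (opNorm_nonneg (NE := NW) hN' (A - B))
    refine le_of_mul_le_mul_right ?_ hvp
    linarith
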